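/- Let n ≥ 1 and let θ be a permutation of {1,…,n} whose disjoint cycle decomposition contains no cycle of length divisible by 4. Let F be the number of fixed points of θ, r the number of cycles of odd length (≥ 3) in the decomposition, s the number of cycles of length ≡ 2 (mod 4) and greater than 2, and t the number of cycles of length 2. Then det(P_θ + P_{θ⁻¹}) = (−1)^{s+t} · 2^{F + r + 2(s+t)} and det(S_θ) = (−1)^{s+t} · 2^{r + 2s}. -/

import Mathlib

open Finset

/-- The permutation matrix of `θ`: `(P_θ)_{i,j} = 1` if `i = θ(j)`, else `0`. -/
noncomputable def permMat {n : ℕ} (θ : Equiv.Perm (Fin n)) : Matrix (Fin n) (Fin n) ℂ :=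
  Matrix.of fun i j => if i = θ j then 1 else 0

/-- The symmetric matrix `S_θ`: `(S_θ)_{i,j} = 1` if `θ(i) = j` or `θ⁻¹(i) = j`, else `0`. -/
noncomputable def symMat {n : ℕ} (θ : Equiv.Perm (Fin n)) : Matrix (Fin n) (Fin n) ℂ :=
  Matrix.of fun i j => if θ i = j ∨ θ⁻¹ i = j then 1 else 0

/-!
For disjoint permutations `σ`, `τ` the permutation matrices satisfy `(P_σ - 1) (P_τ - 1) = 0`, hence
`(X - P_σ) (X - P_τ) = (X - 1) (X - P_σ P_τ)`; by induction over the cycles, the characteristic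
polynomial of `P_θ` is `(X - 1) ^ F * ∏ (X ^ l - 1)`, with `l` running over the cycle lengths.
Since `P_θ + P_θ⁻¹ = P_θ⁻¹ (1 + P_θ²)` and `1 + P_θ² = (i - P_θ) (-i - P_θ)`, the determinant of
`P_θ + P_θ⁻¹` is `sign θ` times the product of the values of this polynomial at `i` and `-i`.
Doubling the rows of `S_θ` whose index is fixed by `θ²` gives `P_θ + P_θ⁻¹`, and there are `F + 2t`
such rows. Both determinants are those of integer matrices, so the outcome over `ℂ` holds over
every commutative ring.
-/

open Polynomial Equiv.Perm

section CharpolyProduct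

variable {α R : Type*} [Fintype α] [DecidableEq α] [CommRing R]

lemma charpoly_mul_charpoly_of_sub_one_mul_sub_one_eq_zero {A B : Matrix α α R}
    (h : (A - 1) * (B - 1) = 0) :
    A.charpoly * B.charpoly = (X - 1) ^ Fintype.card α * (A * B).charpoly := by
  have hAB : A * B = A + B - 1 := by
    rw [← sub_eq_zero, ← h]
    noncomm_ring
  have hchar : A.charmatrix * B.charmatrix = (X - 1 : R[X]) • (A * B).charmatrix := by
    have hmap := congrArg (C : R →+* R[X]).mapMatrix hAB
    simp only [map_mul, map_sub, map_add, map_one] at hmap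
    simp only [Matrix.charmatrix, map_mul, Matrix.scalar_apply, ← Matrix.smul_one_eq_diagonal,
      sub_mul, mul_sub, smul_mul_assoc, mul_smul_comm, one_mul, mul_one, smul_sub, sub_smul,
      one_smul, smul_smul, hmap, smul_add]
    abel
  simp only [Matrix.charpoly, ← Matrix.det_mul, hchar, Matrix.det_smul]

lemma det_mul_self_sub_scalar_sq (M : Matrix α α R) (t : R) :
    (M * M - Matrix.scalar α (t ^ 2)).det = M.charpoly.eval t * M.charpoly.eval (-t) := by
  rw [Matrix.eval_charpoly, Matrix.eval_charpoly, ← Matrix.det_mul]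
  congr 1
  simp only [map_neg, map_pow, sub_mul, mul_sub, mul_neg,
    (Matrix.scalar_commute t (Commute.all t) M).eq]
  noncomm_ring

end CharpolyProduct

section CycleType

lemma eq_one_or_eq_of_isCycle_of_forall_apply_eq {α : Type*} [Finite α]
    {c σ : Equiv.Perm α} (hc : c.IsCycle) (h : ∀ a, σ a = a ∨ σ a = c a) : σ = 1 ∨ σ = c := by
  classical
  cases nonempty_fintype α
  have hsub : σ.cycleFactorsFinset ⊆ {c} := by
    rw [← hc.cycleFactorsFinset_eq_singleton]
    intro d hd
    obtain ⟨hdc, hda⟩ := mem_cycleFactorsFinset_iff.mp hd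
    refine mem_cycleFactorsFinset_iff.mpr ⟨hdc, fun a ha => ?_⟩
    have hσa : σ a ≠ a := hda a ha ▸ mem_support.mp ha
    rw [hda a ha, (h a).resolve_left hσa]
  rcases subset_singleton_iff.mp hsub with h0 | h1
  · exact .inl (cycleFactorsFinset_eq_empty_iff.mp h0)
  · exact .inr (cycleFactorsFinset_injective (h1.trans hc.cycleFactorsFinset_eq_singleton.symm))

variable {α : Type*} [Fintype α] [DecidableEq α]

lemma card_fixed_mul_of_disjoint {σ τ : Equiv.Perm α} (h : σ.Disjoint τ) :
    #{a | σ a = a} + #{a | τ a = a} = Fintype.card α + #{a | (σ * τ) a = a} := by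
  have hunion : ({a | σ a = a} : Finset α) ∪ ({a | τ a = a} : Finset α) = univ := by
    ext a
    simpa using h a
  have hinter : ({a | σ a = a} : Finset α) ∩ ({a | τ a = a} : Finset α) =
      ({a | (σ * τ) a = a} : Finset α) := by
    ext a
    simp only [mem_inter, mem_filter, mem_univ, true_and, h.mul_apply_eq_iff]
  rw [← card_union_add_card_inter, hunion, hinter, card_univ]

lemma prod_eq_pow_card_fixed_mul_pow_card_support {M : Type*} [CommMonoid M] (θ : Equiv.Perm α)
    {f : α → M} {x y : M} (hx : ∀ a, θ a = a → f a = x) (hy : ∀ a, θ a ≠ a → f a = y) :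
    ∏ a, f a = x ^ #{a | θ a = a} * y ^ #θ.support := by
  rw [← prod_filter_mul_prod_filter_not univ (fun a => θ a = a),
    prod_eq_pow_card (b := x) (by simpa using hx), prod_eq_pow_card (b := y) (by simpa using hy)]
  rfl

lemma sign_eq_prod_cycleFactorsFinset (θ : Equiv.Perm α) :
    (sign θ : ℤ) = ∏ c ∈ θ.cycleFactorsFinset, -(-1) ^ #c.support := by
  simp [sign_of_cycleType', cycleType_def, prod_map_val, Units.coe_prod]

lemma card_filter_pow_apply_eq (θ : Equiv.Perm α) (k : ℕ) :
    #{a | (θ ^ k) a = a} = #{a | θ a = a} +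
      ∑ c ∈ θ.cycleFactorsFinset with #c.support ∣ k, #c.support := by
  have hpow {c : Equiv.Perm α} (hc : c ∈ θ.cycleFactorsFinset) {a : α} (ha : a ∈ c.support) :
      (θ ^ k) a = a ↔ #c.support ∣ k :=
    (isCycleOn_support_of_mem_cycleFactorsFinset hc).pow_apply_eq ha
  have hdecomp : ({a | (θ ^ k) a = a} : Finset α) = ({a | θ a = a} : Finset α) ∪
      {c ∈ θ.cycleFactorsFinset | #c.support ∣ k}.biUnion support := by
    ext a
    simp only [mem_union, mem_biUnion, mem_filter, mem_univ, true_and]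
    constructor
    · intro ha
      refine or_iff_not_imp_left.mpr fun hfix => ?_
      have hmem := cycleOf_mem_cycleFactorsFinset_iff.mpr (mem_support.mpr hfix)
      have hself : a ∈ (θ.cycleOf a).support := by simpa using hfix
      exact ⟨θ.cycleOf a, ⟨hmem, (hpow hmem hself).mp ha⟩, hself⟩
    · rintro (hfix | ⟨c, ⟨hc, hdvd⟩, ha⟩)
      · exact pow_apply_eq_self_of_apply_eq_self hfix k
      · exact (hpow hc ha).mpr hdvd
  rw [hdecomp, card_union_of_disjoint, card_biUnion]
  · intro c hc d hd hcd
    exact (θ.cycleFactorsFinset_pairwise_disjoint (mem_filter.mp hc).1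
      (mem_filter.mp hd).1 hcd).disjoint_support
  · simp only [disjoint_left, mem_biUnion, mem_filter, mem_univ, true_and]
    rintro a hfix ⟨c, ⟨hc, -⟩, ha⟩
    exact mem_support.mp (mem_cycleFactorsFinset_support_le hc ha) hfix

lemma prod_cycleFactorsFinset_ite {M : Type*} [CommMonoid M] {θ : Equiv.Perm α}
    (h4 : ∀ c ∈ θ.cycleFactorsFinset, ¬ 4 ∣ #c.support) (x y z : M) :
    ∏ c ∈ θ.cycleFactorsFinset,
        (if Odd #c.support then x else if #c.support = 2 then z else y) =
      x ^ #{c ∈ θ.cycleFactorsFinset | Odd #c.support} *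
      y ^ #{c ∈ θ.cycleFactorsFinset | #c.support % 4 = 2 ∧ 2 < #c.support} *
      z ^ #{c ∈ θ.cycleFactorsFinset | #c.support = 2} := by
  simp only [← prod_const, prod_filter, ← prod_mul_distrib]
  refine prod_congr rfl fun c hc => ?_
  have hmod := h4 c hc
  have htwo := (mem_cycleFactorsFinset_iff.mp hc).1.two_le_card_support
  rcases Nat.even_or_odd #c.support with heven | hodd
  · have hnot : ¬ Odd #c.support := Nat.not_odd_iff_even.mpr heven
    have hnot2 : ¬ Odd 2 := by decide
    rcases htwo.eq_or_lt with heq | hlt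
    · simp [← heq, hnot2]
    · have hmod2 : #c.support % 4 = 2 := by
        have := Nat.even_iff.mp heven
        omega
      simp [hnot, hlt, hlt.ne', hmod2]
  · have := Nat.odd_iff.mp hodd
    have hmod2 : #c.support % 4 ≠ 2 := by omega
    have hne : #c.support ≠ 2 := by omega
    simp [hodd, hmod2, hne]

end CycleType

lemma neg_neg_one_pow_mul_pow_sub_one_mul_neg_pow_sub_one {R : Type*} [CommRing R] {i : R}
    (hi : i ^ 2 = -1) (l : ℕ) :
    -(-1) ^ l * ((i ^ l - 1) * ((-i) ^ l - 1)) =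
      if Odd l then 2 else if 4 ∣ l then 0 else -4 := by
  have hi4 : i ^ 4 = 1 := by linear_combination (i ^ 2 - 1) * hi
  split_ifs with hodd h4
  · have hsq : i ^ l * i ^ l = -1 := by rw [← mul_pow, ← sq, hi, hodd.neg_one_pow]
    rw [hodd.neg_one_pow, hodd.neg_pow]
    linear_combination -hsq
  · obtain ⟨k, rfl⟩ := h4
    simp [pow_mul, hi4]
  · have heven := Nat.not_odd_iff_even.mp hodd
    obtain ⟨k, rfl⟩ := heven.two_dvd
    have hk : Odd k := by
      rw [Nat.odd_iff]
      omega
    rw [heven.neg_one_pow, heven.neg_pow, pow_mul, hi, hk.neg_one_pow]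
    norm_num

section PermMatrix

variable {α : Type*} [DecidableEq α] (R : Type*)

lemma permMatrix_apply [Zero R] [One R] (θ : Equiv.Perm α) (i j : α) :
    θ.permMatrix R i j = if θ i = j then 1 else 0 := by
  simp [PEquiv.toMatrix_apply, Equiv.toPEquiv_apply, eq_comm]

variable [Fintype α] [CommRing R]

lemma permMatrix_sub_one_mul_permMatrix_sub_one_of_disjoint {σ τ : Equiv.Perm α}
    (h : σ.Disjoint τ) : (σ.permMatrix R - 1) * (τ.permMatrix R - 1) = 0 := by
  rw [sub_mul, mul_sub, one_mul, mul_one, ← Matrix.permMatrix_mul]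
  ext i j
  simp only [Matrix.sub_apply, Matrix.zero_apply, permMatrix_apply, Matrix.one_apply, mul_apply]
  rcases h i with hσ | hτ
  · simp [hσ]
  · have hτσ : τ (σ i) = σ i := by
      rw [← mul_apply, ← h.commute.eq, mul_apply, hτ]
    simp [hτ, hτσ]

lemma charpoly_permMatrix_of_isCycle {c : Equiv.Perm α} (hc : c.IsCycle) :
    (c.permMatrix R).charpoly = (X - 1) ^ #{a | c a = a} * (X ^ #c.support - 1) := by
  have hother (σ : Equiv.Perm α) (hσ : σ ≠ 1 ∧ σ ≠ c) :
      ∏ i, (c.permMatrix R).charmatrix i (σ i) = 0 := by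
    obtain ⟨i, hi⟩ : ∃ i, ¬ (σ i = i ∨ σ i = c i) := by
      contrapose! hσ
      exact (eq_one_or_eq_of_isCycle_of_forall_apply_eq hc hσ).resolve_left
    obtain ⟨hi1, hic⟩ := not_or.mp hi
    exact prod_eq_zero (mem_univ i) (by simp [Ne.symm hi1, Ne.symm hic])
  have hone : ∏ i, (c.permMatrix R).charmatrix i i =
      (X - 1) ^ #{a | c a = a} * X ^ #c.support :=
    prod_eq_pow_card_fixed_mul_pow_card_support c (fun i hi => by simp [hi])
      (fun i hi => by simp [hi])
  have hcycle : ∏ i, (c.permMatrix R).charmatrix i (c i) =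
      (X - 1) ^ #{a | c a = a} * (-1) ^ #c.support :=
    prod_eq_pow_card_fixed_mul_pow_card_support c (fun i hi => by simp [hi])
      (fun i hi => by simp [Ne.symm hi])
  have hsign : ((-1) ^ #c.support * (-1) ^ #c.support : R[X]) = 1 := by simp [← mul_pow]
  rw [Matrix.charpoly, ← Matrix.det_transpose, Matrix.det_apply',
    sum_eq_add_of_mem 1 c (mem_univ _) (mem_univ _) hc.ne_one.symm]
  · simp only [Matrix.transpose_apply, one_apply, hone, hcycle, hc.sign, Equiv.Perm.sign_one]
    push_cast
    linear_combination -(X - 1) ^ #{a | c a = a} * hsign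
  · intro σ _ hσ
    simp only [Matrix.transpose_apply, hother σ hσ, mul_zero]

theorem charpoly_permMatrix (θ : Equiv.Perm α) :
    (θ.permMatrix R).charpoly =
      (X - 1) ^ #{a | θ a = a} * ∏ c ∈ θ.cycleFactorsFinset, (X ^ #c.support - 1) := by
  induction θ using cycle_induction_on with
  | base_one => simp [Matrix.charpoly_one]
  | base_cycles c hc =>
    rw [charpoly_permMatrix_of_isCycle R hc, hc.cycleFactorsFinset_eq_singleton, prod_singleton]
  | induction_disjoint σ τ h _ ihσ ihτ =>
    have hreg : IsLeftRegular ((X - 1 : R[X]) ^ Fintype.card α) :=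
      ((monic_X_sub_C (1 : R)).pow _).isRegular.left
    apply hreg
    simp only
    calc (X - 1) ^ Fintype.card α * ((σ * τ).permMatrix R).charpoly
        = (σ.permMatrix R).charpoly * (τ.permMatrix R).charpoly := by
          rw [h.commute.eq, Matrix.permMatrix_mul,
            charpoly_mul_charpoly_of_sub_one_mul_sub_one_eq_zero
              (permMatrix_sub_one_mul_permMatrix_sub_one_of_disjoint R h)]
      _ = (X - 1) ^ (#{a | σ a = a} + #{a | τ a = a}) *
            ∏ c ∈ (σ * τ).cycleFactorsFinset, (X ^ #c.support - 1) := by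
          rw [ihσ, ihτ, h.cycleFactorsFinset_mul_eq_union,
            prod_union h.disjoint_cycleFactorsFinset]
          ring
      _ = _ := by rw [card_fixed_mul_of_disjoint h, pow_add, mul_assoc]

lemma det_permMatrix_add_inv_of_sq_eq_neg_one {i : R} (hi : i ^ 2 = -1) (θ : Equiv.Perm α) :
    (θ.permMatrix R + θ⁻¹.permMatrix R).det = 2 ^ #{a | θ a = a} *
      ∏ c ∈ θ.cycleFactorsFinset,
        -(-1) ^ #c.support * ((i ^ #c.support - 1) * ((-i) ^ #c.support - 1)) := by
  have hfactor : θ.permMatrix R + θ⁻¹.permMatrix R =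
      θ⁻¹.permMatrix R * (θ.permMatrix R * θ.permMatrix R - Matrix.scalar α (i ^ 2)) := by
    rw [hi, map_neg, map_one, sub_neg_eq_add, mul_add, mul_one, ← mul_assoc,
      ← Matrix.permMatrix_mul, mul_inv_cancel, Matrix.permMatrix_one, one_mul]
  have hsign : ((sign θ : ℤ) : R) = ∏ c ∈ θ.cycleFactorsFinset, -(-1) ^ #c.support := by
    simp [sign_eq_prod_cycleFactorsFinset]
  have htwo : (i - 1) * (-i - 1) = 2 := by linear_combination -hi
  rw [hfactor, Matrix.det_mul, Matrix.det_permutation, sign_inv, hsign,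
    det_mul_self_sub_scalar_sq, charpoly_permMatrix]
  simp only [eval_mul, eval_pow, eval_sub, eval_X, eval_one, eval_prod, prod_mul_distrib, ← htwo,
    mul_pow]
  ring

lemma map_det_permMatrix_add_inv {R S : Type*} [CommRing R] [CommRing S] (f : R →+* S)
    (θ : Equiv.Perm α) :
    f (θ.permMatrix R + θ⁻¹.permMatrix R).det = (θ.permMatrix S + θ⁻¹.permMatrix S).det := by
  rw [RingHom.map_det, map_add, RingHom.mapMatrix_apply, RingHom.mapMatrix_apply,
    PEquiv.map_toMatrix, PEquiv.map_toMatrix]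

theorem det_permMatrix_add_inv (θ : Equiv.Perm α) :
    (θ.permMatrix R + θ⁻¹.permMatrix R).det = 2 ^ #{a | θ a = a} *
      ∏ c ∈ θ.cycleFactorsFinset,
        if Odd #c.support then 2 else if 4 ∣ #c.support then 0 else -4 := by
  have hℤ : (θ.permMatrix ℤ + θ⁻¹.permMatrix ℤ).det = 2 ^ #{a | θ a = a} *
      ∏ c ∈ θ.cycleFactorsFinset,
        if Odd #c.support then 2 else if 4 ∣ #c.support then 0 else -4 := by
    apply (Int.castRingHom ℂ).injective_int
    have hℂ := det_permMatrix_add_inv_of_sq_eq_neg_one ℂ Complex.I_sq θ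
    simp only [neg_neg_one_pow_mul_pow_sub_one_mul_neg_pow_sub_one Complex.I_sq] at hℂ
    rw [map_det_permMatrix_add_inv, hℂ]
    simp [Int.cast_ite]
  rw [← map_det_permMatrix_add_inv (Int.castRingHom R), hℤ]
  simp [Int.cast_ite]

end PermMatrix

section SymmPermMatrix

variable {α : Type*} [DecidableEq α] (R : Type*)

/-- The `0`-`1` matrix `S_θ` over `R` whose `(i, j)` entry is `1` when `θ` sends `i` to `j` or `j`
to `i`. It differs from `P_θ + P_θ⁻¹` in the rows fixed by `θ²`, where the two ones of the sum
coincide. -/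
def symmPermMatrix [Zero R] [One R] (θ : Equiv.Perm α) : Matrix α α R :=
  Matrix.of fun i j => if θ i = j ∨ θ⁻¹ i = j then 1 else 0

lemma map_symmPermMatrix {R S : Type*} [NonAssocSemiring R] [NonAssocSemiring S] (f : R →+* S)
    (θ : Equiv.Perm α) : (symmPermMatrix R θ).map f = symmPermMatrix S θ := by
  ext i j
  simp [symmPermMatrix, apply_ite f]

variable [Fintype α] [CommRing R]

lemma permMatrix_add_inv_eq_diagonal_mul_symmPermMatrix (θ : Equiv.Perm α) :
    θ.permMatrix R + θ⁻¹.permMatrix R =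
      Matrix.diagonal (fun i => if (θ ^ 2) i = i then 2 else 1) * symmPermMatrix R θ := by
  ext i j
  have hinv : (θ ^ 2) i = i ↔ θ i = θ⁻¹ i := by rw [sq, mul_apply, eq_inv_iff_eq]
  simp only [Matrix.diagonal_mul, Matrix.add_apply, permMatrix_apply, symmPermMatrix,
    Matrix.of_apply, hinv]
  generalize θ i = k, θ⁻¹ i = l
  by_cases hkl : k = l
  · by_cases hkj : k = j <;> simp [← hkl, hkj, one_add_one_eq_two]
  · by_cases hkj : k = j
    · simp [← hkj, hkl, Ne.symm hkl]
    · simp [hkl, hkj]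

lemma two_pow_card_mul_det_symmPermMatrix (θ : Equiv.Perm α) :
    2 ^ #{a | (θ ^ 2) a = a} * (symmPermMatrix R θ).det =
      (θ.permMatrix R + θ⁻¹.permMatrix R).det := by
  rw [permMatrix_add_inv_eq_diagonal_mul_symmPermMatrix, Matrix.det_mul, Matrix.det_diagonal,
    prod_ite, prod_const, prod_const_one, mul_one]

theorem det_symmPermMatrix (θ : Equiv.Perm α) :
    (symmPermMatrix R θ).det = ∏ c ∈ θ.cycleFactorsFinset,
      if Odd #c.support then 2 else if 4 ∣ #c.support then 0 else
        if #c.support = 2 then -1 else -4 := by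
  have hℤ : (symmPermMatrix ℤ θ).det = ∏ c ∈ θ.cycleFactorsFinset,
      if Odd #c.support then 2 else if 4 ∣ #c.support then 0 else
        if #c.support = 2 then -1 else -4 := by
    apply mul_left_cancel₀ (pow_ne_zero #{a | (θ ^ 2) a = a} (two_ne_zero (α := ℤ)))
    rw [two_pow_card_mul_det_symmPermMatrix, det_permMatrix_add_inv, card_filter_pow_apply_eq,
      pow_add, mul_assoc, ← prod_pow_eq_pow_sum, prod_filter, ← prod_mul_distrib]
    congr 1
    refine prod_congr rfl fun c hc => ?_
    have htwo := (mem_cycleFactorsFinset_iff.mp hc).1.two_le_card_support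
    have hdvd : #c.support ∣ 2 ↔ #c.support = 2 :=
      ⟨fun h => (Nat.le_of_dvd two_pos h).antisymm htwo, fun h => h ▸ dvd_rfl⟩
    have hnot : ¬ Odd 2 := by decide
    by_cases h2 : #c.support = 2 <;> simp [hdvd, h2, hnot]
  rw [← map_symmPermMatrix (Int.castRingHom R), ← RingHom.mapMatrix_apply, ← RingHom.map_det, hℤ]
  simp [Int.cast_ite]

end SymmPermMatrix

theorem genMatrixFn_stmt19_general {α : Type*} [Fintype α] [DecidableEq α] (R : Type*) [CommRing R]
    (θ : Equiv.Perm α) (hno4 : ∀ c ∈ θ.cycleFactorsFinset, ¬ 4 ∣ #c.support) (F r s t : ℕ)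
    (hF : F = #{a | θ a = a})
    (hr : r = #{c ∈ θ.cycleFactorsFinset | Odd #c.support})
    (hs : s = #{c ∈ θ.cycleFactorsFinset | #c.support % 4 = 2 ∧ 2 < #c.support})
    (ht : t = #{c ∈ θ.cycleFactorsFinset | #c.support = 2}) :
    (θ.permMatrix R + θ⁻¹.permMatrix R).det = (-1) ^ (s + t) * 2 ^ (F + r + 2 * (s + t)) ∧
      (symmPermMatrix R θ).det = (-1) ^ (s + t) * 2 ^ (r + 2 * s) := by
  have hprod (z : R) : (∏ c ∈ θ.cycleFactorsFinset, if Odd #c.support then 2 else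
      if 4 ∣ #c.support then 0 else if #c.support = 2 then z else -4) =
      2 ^ r * (-4) ^ s * z ^ t := by
    rw [hr, hs, ht, ← prod_cycleFactorsFinset_ite hno4]
    exact prod_congr rfl fun c hc => by rw [if_neg (hno4 c hc)]
  have hfour : (-4 : R) = -1 * 2 ^ 2 := by norm_num
  constructor
  · have hsum := hprod (-4)
    simp only [ite_self] at hsum
    rw [det_permMatrix_add_inv, hsum, ← hF, hfour, mul_pow, mul_pow, ← pow_mul, ← pow_mul]
    ring
  · rw [det_symmPermMatrix, hprod, hfour, mul_pow, ← pow_mul]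
    ring

lemma permMat_eq_permMatrix_inv {n : ℕ} (θ : Equiv.Perm (Fin n)) :
    permMat θ = θ⁻¹.permMatrix ℂ := by
  ext i j
  simp only [permMat, Matrix.of_apply, permMatrix_apply, inv_eq_iff_eq]

lemma symMat_eq_symmPermMatrix {n : ℕ} (θ : Equiv.Perm (Fin n)) :
    symMat θ = symmPermMatrix ℂ θ := rfl

/-- Suppose the disjoint cycle decomposition of `θ` has no cycle of
length divisible by 4. With `F` the number of fixed points, `r` the number of cycles of
odd length, `s` the number of cycles of length `≡ 2 (mod 4)` greater than 2, and `t` the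
number of 2-cycles, we have `det(P_θ + P_{θ⁻¹}) = (−1)^{s+t}·2^{F+r+2(s+t)}` and
`det(S_θ) = (−1)^{s+t}·2^{r+2s}`. -/
theorem genMatrixFn_stmt19 (n : ℕ) (hn : 1 ≤ n) (θ : Equiv.Perm (Fin n))
    (hno4 : ∀ c ∈ θ.cycleFactorsFinset, ¬ (4 ∣ c.support.card))
    (F r s t : ℕ)
    (hF : F = (Finset.univ.filter fun i => θ i = i).card)
    (hr : r = (θ.cycleFactorsFinset.filter fun c => Odd c.support.card).card)
    (hs : s = (θ.cycleFactorsFinset.filter fun c =>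
      c.support.card % 4 = 2 ∧ 2 < c.support.card).card)
    (ht : t = (θ.cycleFactorsFinset.filter fun c => c.support.card = 2).card) :
    (permMat θ + permMat θ⁻¹).det = (-1 : ℂ) ^ (s + t) * 2 ^ (F + r + 2 * (s + t)) ∧
      (symMat θ).det = (-1 : ℂ) ^ (s + t) * 2 ^ (r + 2 * s) := by
  simpa only [permMat_eq_permMatrix_inv, inv_inv, add_comm, symMat_eq_symmPermMatrix] using
    genMatrixFn_stmt19_general ℂ θ hno4 F r s t hF hr hs ht
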